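/- arXiv:1506.04036 — 3 statements merged into one kernel-verified Lean document; each statement's English description precedes it below -/
import Mathlib

section
/- Let C ⊆ F_{q^m}^n be an F_{q^m}-linear code of dimension k with full-rank generator matrix G ∈ F_{q^m}^{k×n} (the rows of G form a basis of C), and let 1 ≤ r ≤ k. For each F_{q^m}-subspace U ⊆ F_{q^m}^k define L^G_U = { x ∈ F_q^n : G x^T ∈ U }, an F_q-subspace of F_q^n. Then d_{R,r}(C) = n − max{ dim_{F_q} L^G_U : U ⊆ F_{q^m}^k, dim_{F_{q^m}} U = k − r }. -/
open Submodule Module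

namespace RankPaper

variable {n : ℕ}

/-- The coordinatewise `q^i`-th power map on `Fqm^n`. -/
def qpowMap (q i : ℕ) {Fqm : Type} [Field Fqm] (v : Fin n → Fqm) : Fin n → Fqm :=
  fun j => v j ^ q ^ i

/-- The Galois closure `D* = Σ_{i=0}^{m-1} D^{q^i}` of a subspace (as the span of the
union of the images of `D` under the coordinatewise `q^i`-power maps, `0 ≤ i < m`). -/
def galClosure (q m : ℕ) {Fqm : Type} [Field Fqm] (D : Submodule Fqm (Fin n → Fqm)) :
    Submodule Fqm (Fin n → Fqm) :=
  Submodule.span Fqm (⋃ i ∈ Finset.range m, qpowMap q i '' (D : Set (Fin n → Fqm)))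

/-- `D` is Galois closed if `D = D*`. -/
def GaloisClosed (q m : ℕ) {Fqm : Type} [Field Fqm] (D : Submodule Fqm (Fin n → Fqm)) : Prop :=
  galClosure q m D = D

/-- Rank weight of a subspace: `wt_R(D) = dim_{Fqm} D*`. -/
noncomputable def wtR (q m : ℕ) {Fqm : Type} [Field Fqm]
    (D : Submodule Fqm (Fin n → Fqm)) : ℕ :=
  finrank Fqm (galClosure q m D)

/-- Rank weight of a vector: `wt_R(c) = wt_R(span {c})`. -/
noncomputable def wtRv (q m : ℕ) {Fqm : Type} [Field Fqm] (c : Fin n → Fqm) : ℕ :=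
  wtR q m (Submodule.span Fqm ({c} : Set (Fin n → Fqm)))

/-- Hamming weight of a subspace: the number of coordinates where some element is nonzero. -/
noncomputable def wtH {Fqm : Type} [Field Fqm] (D : Submodule Fqm (Fin n → Fqm)) : ℕ :=
  {i : Fin n | ∃ d ∈ D, d i ≠ 0}.ncard

/-- `r`-th generalized rank weight of a linear code. -/
noncomputable def dR (q m : ℕ) {Fqm : Type} [Field Fqm]
    (C : Submodule Fqm (Fin n → Fqm)) (r : ℕ) : ℕ :=
  sInf { dv | ∃ V : Submodule Fqm (Fin n → Fqm),
    GaloisClosed q m V ∧ r ≤ finrank Fqm ↥(C ⊓ V) ∧ dv = finrank Fqm ↥V }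

/-- `r`-th generalized Hamming weight of a linear code. -/
noncomputable def dH {Fqm : Type} [Field Fqm]
    (C : Submodule Fqm (Fin n → Fqm)) (r : ℕ) : ℕ :=
  sInf { w | ∃ D : Submodule Fqm (Fin n → Fqm), D ≤ C ∧ finrank Fqm ↥D = r ∧ w = wtH D }

/-- `r`-th relative generalized rank weight of a nested code pair. -/
noncomputable def MR (q m : ℕ) {Fqm : Type} [Field Fqm]
    (C₁ C₂ : Submodule Fqm (Fin n → Fqm)) (r : ℕ) : ℕ :=
  sInf { dv | ∃ V : Submodule Fqm (Fin n → Fqm), GaloisClosed q m V ∧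
    r ≤ finrank Fqm ↥(C₁ ⊓ V) - finrank Fqm ↥(C₂ ⊓ V) ∧ dv = finrank Fqm ↥V }

/-- Minimum rank distance of an arbitrary (possibly nonlinear) code. -/
noncomputable def dRset (q m : ℕ) {Fqm : Type} [Field Fqm] (C : Set (Fin n → Fqm)) : ℕ :=
  sInf { w | ∃ c₁ ∈ C, ∃ c₂ ∈ C, c₁ ≠ c₂ ∧ w = wtRv q m (c₁ - c₂) }

/-- The linear functional `x ↦ Σ_j x_j y_j` (dot product with `y`). -/
def dotLin {K : Type} [Field K] (y : Fin n → K) : (Fin n → K) →ₗ[K] K :=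
  ∑ j, y j • LinearMap.proj j

/-- Orthogonal complement of a subspace with respect to the standard bilinear form. -/
def perp {K : Type} [Field K] (L : Submodule K (Fin n → K)) : Submodule K (Fin n → K) :=
  ⨅ y ∈ L, LinearMap.ker (dotLin y)

/-- The coordinatewise inclusion `Fq^n → Fqm^n`. -/
def embFq (Fq Fqm : Type) [Field Fq] [Field Fqm] [Algebra Fq Fqm] :
    (Fin n → Fq) →ₗ[Fq] (Fin n → Fqm) :=
  LinearMap.pi fun j => (Algebra.linearMap Fq Fqm).comp (LinearMap.proj j)

/-- `V_L = L ⊗ Fqm`, the `Fqm`-span of `L ⊆ Fq^n` inside `Fqm^n`. -/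
def VL {Fq : Type} (Fqm : Type) [Field Fq] [Field Fqm] [Algebra Fq Fqm]
    (L : Submodule Fq (Fin n → Fq)) : Submodule Fqm (Fin n → Fqm) :=
  Submodule.span Fqm (embFq Fq Fqm '' (L : Set (Fin n → Fq)))

/-- Rank-punctured code `C^L`: the image of `C` in `Fqm^n / V_{L^⊥}`. -/
noncomputable def punct {Fq Fqm : Type} [Field Fq] [Field Fqm] [Algebra Fq Fqm]
    (L : Submodule Fq (Fin n → Fq)) (C : Submodule Fqm (Fin n → Fqm)) :
    Submodule Fqm ((Fin n → Fqm) ⧸ VL Fqm (perp L)) :=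
  Submodule.map (VL Fqm (perp L)).mkQ C


/-- The `Fq`-linear map `Fq^n → Fqm^k`, `x ↦ G xᵀ`. -/
noncomputable def liftG {Fq Fqm : Type} [Field Fq] [Field Fqm] [Algebra Fq Fqm] {k : ℕ}
    (G : Matrix (Fin k) (Fin n) Fqm) : (Fin n → Fq) →ₗ[Fq] (Fin k → Fqm) :=
  ((Matrix.mulVecLin G).restrictScalars Fq).comp (embFq Fq Fqm)

/-!
By Galois descent, the Galois closed subspaces of `Fqm^n` are exactly the spaces `V = (V_M)^⊥` with
`M ⊆ Fq^n`, and then `dim V = n - dim M`. A codeword `aG` lies in `(V_M)^⊥` if and only if `a` is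
orthogonal to the `Fqm`-span `W` of `G M`, so `dim (C ∩ V) = k - dim W`. This is at least `r` if and
only if `W` is contained in some `U` of dimension `k - r`, that is, if and only if `M ⊆ L^G_U` for
such a `U`. Minimizing `n - dim M` therefore amounts to maximizing `dim L^G_U`.
-/

open scoped Matrix

section LinearAlgebra

theorem exists_le_finrank_eq {K E : Type*} [DivisionRing K] [AddCommGroup E] [Module K E]
    [FiniteDimensional K E] (W : Submodule K E) {d : ℕ} (hWd : finrank K W ≤ d)
    (hd : d ≤ finrank K E) : ∃ U : Submodule K E, W ≤ U ∧ finrank K U = d := by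
  induction d, hWd using Nat.le_induction with
  | base => exact ⟨W, le_rfl, rfl⟩
  | succ d _ ih =>
    obtain ⟨U, hWU, hU⟩ := ih (by omega)
    obtain ⟨v, hv⟩ : ∃ v, v ∉ U := by
      by_contra! hall
      rw [eq_top_iff'.2 hall, finrank_top] at hU
      omega
    exact ⟨U ⊔ K ∙ v, le_sup_of_le_left hWU, by rw [finrank_sup_span_singleton hv, hU]⟩

variable {K : Type} [Field K]

theorem mem_perp {L : Submodule K (Fin n → K)} {x : Fin n → K} :
    x ∈ perp L ↔ ∀ y ∈ L, y ⬝ᵥ x = 0 := by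
  simp [perp, dotLin, dotProduct]

theorem mem_perp_span {s : Set (Fin n → K)} {x : Fin n → K} :
    x ∈ perp (span K s) ↔ ∀ y ∈ s, y ⬝ᵥ x = 0 := by
  rw [mem_perp]
  refine ⟨fun h y hy => h y (subset_span hy), fun h y hy => ?_⟩
  have hs : span K s ≤ LinearMap.ker (dotProductEquiv K (Fin n) x) :=
    span_le.2 fun z hz => (dotProduct_comm x z).trans (h z hz)
  exact (dotProduct_comm y x).trans (hs hy)

theorem perp_eq_dualCoannihilator (L : Submodule K (Fin n → K)) :
    perp L = (L.map (dotProductEquiv K (Fin n)).toLinearMap).dualCoannihilator := by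
  ext x
  rw [mem_perp, mem_dualCoannihilator]
  refine ⟨?_, fun h y hy => h _ (mem_map_of_mem hy)⟩
  rintro h _ ⟨y, hy, rfl⟩
  exact h y hy

theorem finrank_add_finrank_perp (L : Submodule K (Fin n → K)) :
    finrank K L + finrank K (perp L) = n := by
  have h := Subspace.finrank_add_finrank_dualCoannihilator_eq
    (L.map (dotProductEquiv K (Fin n)).toLinearMap)
  rwa [LinearEquiv.finrank_map_eq, ← perp_eq_dualCoannihilator, finrank_fin_fun] at h

theorem perp_perp (L : Submodule K (Fin n → K)) : perp (perp L) = L := by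
  refine (eq_of_le_of_finrank_eq (fun x hx => ?_) ?_).symm
  · exact mem_perp.2 fun y hy => (dotProduct_comm y x).trans (mem_perp.1 hy x hx)
  · have := finrank_add_finrank_perp L
    have := finrank_add_finrank_perp (perp L)
    omega

end LinearAlgebra

section ExtensionOfScalars

variable {K F : Type} [Field K] [Field F] [Algebra K F]

theorem VL_span (s : Set (Fin n → K)) : VL F (span K s) = span F (embFq K F '' s) := by
  rw [VL, ← map_coe, map_span, span_span_of_tower]

theorem finrank_VL (L : Submodule K (Fin n → K)) : finrank F (VL F L) = finrank K L := by
  let b := finBasis K L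
  have hb : LinearIndependent K (L.subtype ∘ b) :=
    b.linearIndependent.map' L.subtype L.ker_subtype
  have hbF : LinearIndependent F (embFq K F ∘ L.subtype ∘ b) :=
    linearIndependent_algebraMap_comp_iff.2 hb
  have hspan : span K (Set.range (L.subtype ∘ b)) = L := by
    rw [Set.range_comp, ← map_span, b.span_eq, map_subtype_top]
  rw [← hspan, VL_span, ← Set.range_comp, finrank_span_eq_card hbF, finrank_span_eq_card hb]

theorem finrank_perp_VL (L : Submodule K (Fin n → K)) :
    finrank F (perp (VL F L)) = n - finrank K L := by
  have h := finrank_add_finrank_perp (VL F L)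
  rw [finrank_VL] at h
  omega

theorem dotProduct_embFq (x y : Fin n → K) :
    embFq K F x ⬝ᵥ embFq K F y = algebraMap K F (x ⬝ᵥ y) := by
  simp [embFq, dotProduct]

theorem perp_VL (L : Submodule K (Fin n → K)) : perp (VL F L) = VL F (perp L) := by
  refine (eq_of_le_of_finrank_eq (span_le.2 ?_) ?_).symm
  · rintro _ ⟨y, hy, rfl⟩
    refine mem_perp_span.2 ?_
    rintro _ ⟨x, hx, rfl⟩
    rw [dotProduct_embFq, mem_perp.1 hy x hx, map_zero]
  · have hL := finrank_add_finrank_perp L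
    rw [← VL, finrank_VL, finrank_perp_VL]
    omega

theorem algHom_comp_mem_VL (σ : F →ₐ[K] F) {L : Submodule K (Fin n → K)} {v : Fin n → F}
    (hv : v ∈ VL F L) : σ ∘ v ∈ VL F L := by
  rw [VL] at hv
  induction hv using span_induction with
  | mem v hv =>
    obtain ⟨x, hx, rfl⟩ := hv
    have hfix : σ ∘ embFq K F x = embFq K F x := by ext j; simp [embFq]
    rw [hfix]
    exact subset_span ⟨x, hx, rfl⟩
  | zero =>
    rw [Pi.comp_zero, map_zero]
    exact zero_mem _
  | add v w _ _ hv hw => simpa [Function.comp_def] using! add_mem hv hw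
  | smul c v _ hv => simpa [Function.comp_def] using! smul_mem (VL F L) (σ c) hv

end ExtensionOfScalars

section GaloisDescent

variable {K F : Type} [Field K] [Field F] [Algebra K F]

variable (K) in
/-- The `K`-rational points `V ∩ K^n` of a subspace `V ⊆ F^n`, as a subspace of `K^n`. -/
def rationalPoints (V : Submodule F (Fin n → F)) : Submodule K (Fin n → K) :=
  (V.restrictScalars K).comap (embFq K F)

theorem VL_rationalPoints_le (V : Submodule F (Fin n → F)) : VL F (rationalPoints K V) ≤ V :=
  span_le.2 (Set.image_subset_iff.2 fun _ hx => hx)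

variable [FiniteDimensional K F]

theorem sum_traceDual_smul_embFq_trace [Algebra.IsSeparable K F] {ι : Type*} [Fintype ι]
    [DecidableEq ι] (b : Basis ι K F) (v : Fin n → F) :
    ∑ i, b.traceDual i • embFq K F (fun j => Algebra.trace K F (b i * v j)) = v := by
  ext j
  simpa [embFq, Basis.traceDual_repr_apply, Algebra.smul_def, mul_comm] using
    b.traceDual.sum_repr (v j)

theorem trace_mul_mem_rationalPoints [IsGalois K F] {V : Submodule F (Fin n → F)}
    (hV : ∀ σ : Gal(F/K), ∀ v ∈ V, σ ∘ v ∈ V) (c : F) {v : Fin n → F} (hv : v ∈ V) :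
    (fun j => Algebra.trace K F (c * v j)) ∈ rationalPoints K V := by
  have htrace : embFq K F (fun j => Algebra.trace K F (c * v j)) =
      ∑ σ : Gal(F/K), σ c • (σ ∘ v) := by
    ext j
    simp [embFq, trace_eq_sum_automorphisms]
  change embFq K F _ ∈ V
  rw [htrace]
  exact sum_mem fun σ _ => V.smul_mem _ (hV σ v hv)

theorem VL_rationalPoints_of_forall_algEquiv_comp_mem [IsGalois K F]
    {V : Submodule F (Fin n → F)} (hV : ∀ σ : Gal(F/K), ∀ v ∈ V, σ ∘ v ∈ V) :
    VL F (rationalPoints K V) = V := by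
  refine (VL_rationalPoints_le V).antisymm fun v hv => ?_
  rw [← sum_traceDual_smul_embFq_trace (finBasis K F) v]
  exact sum_mem fun i _ => smul_mem _ _ <|
    subset_span ⟨_, trace_mul_mem_rationalPoints hV _ hv, rfl⟩

end GaloisDescent

section GaloisClosed

theorem galoisClosed_iff_forall_qpowMap_mem {F : Type} [Field F] {q m : ℕ} (hm : 0 < m)
    {V : Submodule F (Fin n → F)} :
    GaloisClosed q m V ↔ ∀ i < m, ∀ v ∈ V, qpowMap q i v ∈ V := by
  have hle : V ≤ galClosure q m V := fun v hv =>
    subset_span (Set.mem_biUnion (Finset.mem_range.2 hm) ⟨v, hv, by ext; simp [qpowMap]⟩)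
  rw [GaloisClosed, ← hle.ge_iff_eq', galClosure, span_le]
  simp only [Set.iUnion_subset_iff, Finset.mem_range, Set.image_subset_iff]
  rfl

variable {Fq Fqm : Type} [Field Fq] [Field Fqm] [Algebra Fq Fqm] [Finite Fqm]

theorem galoisClosed_iff_forall_algEquiv_comp_mem {V : Submodule Fqm (Fin n → Fqm)} :
    GaloisClosed (Nat.card Fq) (finrank Fq Fqm) V ↔
      ∀ σ : Gal(Fqm/Fq), ∀ v ∈ V, σ ∘ v ∈ V := by
  have := Finite.of_injective _ (algebraMap Fq Fqm).injective
  have := Fintype.ofFinite Fq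
  have hpow (i : ℕ) (v : Fin n → Fqm) : qpowMap (Nat.card Fq) i v =
      (FiniteField.frobeniusAlgEquivOfAlgebraic Fq Fqm ^ i) ∘ v := by
    ext j
    simp [qpowMap, AlgEquiv.coe_pow, FiniteField.coe_frobeniusAlgEquivOfAlgebraic_iterate]
  rw [galoisClosed_iff_forall_qpowMap_mem finrank_pos,
    (FiniteField.bijective_frobeniusAlgEquivOfAlgebraic_pow Fq Fqm).surjective.forall]
  simp only [hpow, Fin.forall_iff]

theorem galoisClosed_iff_exists_eq_VL {V : Submodule Fqm (Fin n → Fqm)} :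
    GaloisClosed (Nat.card Fq) (finrank Fq Fqm) V ↔
      ∃ L : Submodule Fq (Fin n → Fq), V = VL Fqm L := by
  have := Finite.of_injective _ (algebraMap Fq Fqm).injective
  rw [galoisClosed_iff_forall_algEquiv_comp_mem]
  constructor
  · exact fun hV => ⟨_, (VL_rationalPoints_of_forall_algEquiv_comp_mem hV).symm⟩
  · rintro ⟨L, rfl⟩ σ v hv
    exact algHom_comp_mem_VL σ.toAlgHom hv

theorem galoisClosed_iff_exists_eq_perp_VL {V : Submodule Fqm (Fin n → Fqm)} :
    GaloisClosed (Nat.card Fq) (finrank Fq Fqm) V ↔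
      ∃ M : Submodule Fq (Fin n → Fq), V = perp (VL Fqm M) := by
  rw [galoisClosed_iff_exists_eq_VL, (Function.Involutive.surjective perp_perp).exists]
  simp only [perp_VL]

end GaloisClosed

section GeneratorMatrix

variable {K F : Type} [Field K] [Field F] [Algebra K F] {k : ℕ} {G : Matrix (Fin k) (Fin n) F}

variable (G) in
theorem comap_vecMulLinear_perp_VL (M : Submodule K (Fin n → K)) :
    (perp (VL F M)).comap G.vecMulLinear = perp (span F (liftG G '' (M : Set (Fin n → K)))) := by
  have hadj (a : Fin k → F) (x : Fin n → K) :
      embFq K F x ⬝ᵥ (a ᵥ* G) = liftG G x ⬝ᵥ a := by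
    rw [dotProduct_comm, ← Matrix.dotProduct_mulVec, dotProduct_comm]
    rfl
  ext a
  simp [VL, mem_perp_span, hadj]

theorem finrank_span_image_add_finrank_inf_perp_VL (hG : LinearIndependent F G.row)
    (M : Submodule K (Fin n → K)) :
    finrank F (span F (liftG G '' (M : Set (Fin n → K)))) +
      finrank F ↥(span F (Set.range G.row) ⊓ perp (VL F M)) = k := by
  have hcode : span F (Set.range G.row) ⊓ perp (VL F M) =
      (perp (span F (liftG G '' (M : Set (Fin n → K))))).map G.vecMulLinear := by
    rw [← comap_vecMulLinear_perp_VL, map_comap_eq, range_vecMulLinear]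
  rw [hcode, ← (equivMapOfInjective _ (Matrix.vecMul_injective_iff.2 hG) _).finrank_eq,
    finrank_add_finrank_perp]

theorem le_finrank_inf_perp_VL_iff (hG : LinearIndependent F G.row) {r : ℕ} (hr : r ≤ k)
    {M : Submodule K (Fin n → K)} :
    r ≤ finrank F ↥(span F (Set.range G.row) ⊓ perp (VL F M)) ↔
      ∃ U : Submodule F (Fin k → F), finrank F U = k - r ∧
        M ≤ (U.restrictScalars K).comap (liftG G) := by
  have hdim := finrank_span_image_add_finrank_inf_perp_VL hG M
  have hspan (U : Submodule F (Fin k → F)) :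
      M ≤ (U.restrictScalars K).comap (liftG G) ↔
        span F (liftG G '' (M : Set (Fin n → K))) ≤ U := by
    rw [span_le, Set.image_subset_iff]
    rfl
  simp only [hspan]
  constructor
  · intro hle
    obtain ⟨U, hU, hUr⟩ := exists_le_finrank_eq (span F (liftG G '' (M : Set (Fin n → K))))
      (d := k - r) (by omega) (by simp)
    exact ⟨U, hUr, hU⟩
  · rintro ⟨U, hUr, hU⟩
    have := finrank_mono hU
    omega

end GeneratorMatrix

/-- if the rows of `G` form a basis of `C` and `1 ≤ r ≤ k`, then
`d_{R,r}(C) = n − max { dim_{Fq} L^G_U : U ⊆ Fqm^k, dim U = k − r }`, where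
`L^G_U = { x ∈ Fq^n : G xᵀ ∈ U }`. -/
theorem stmt3 (q m n k r : ℕ) (Fq Fqm : Type) [Field Fq] [Field Fqm] [Algebra Fq Fqm]
    [Finite Fqm] (hq : Nat.card Fq = q) (hm : finrank Fq Fqm = m)
    (G : Matrix (Fin k) (Fin n) Fqm) (C : Submodule Fqm (Fin n → Fqm))
    (hGli : LinearIndependent Fqm (fun i : Fin k => G i))
    (hGspan : C = Submodule.span Fqm (Set.range fun i : Fin k => G i))
    (hr1 : 1 ≤ r) (hrk : r ≤ k) :
    dR q m C r = n - sSup { d | ∃ U : Submodule Fqm (Fin k → Fqm),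
        finrank Fqm U = k - r ∧
        d = finrank Fq (Submodule.comap (liftG G) (U.restrictScalars Fq)) } := by
  subst hq hm hGspan
  set T := { d | ∃ U : Submodule Fqm (Fin k → Fqm), finrank Fqm U = k - r ∧
    d = finrank Fq (Submodule.comap (liftG G) (U.restrictScalars Fq)) }
  have hT_bdd : BddAbove T := ⟨n, by rintro _ ⟨U, -, rfl⟩; exact (finrank_le _).trans_eq (by simp)⟩
  have hT_ne : T.Nonempty := by
    obtain ⟨U, -, hU⟩ :=
      exists_le_finrank_eq (⊥ : Submodule Fqm (Fin k → Fqm)) (d := k - r) (by simp) (by simp)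
    exact ⟨_, U, hU, rfl⟩
  refine IsLeast.csInf_eq ⟨?_, ?_⟩
  · obtain ⟨U, hU, hUmax⟩ := Nat.sSup_mem hT_ne hT_bdd
    exact ⟨_, galoisClosed_iff_exists_eq_perp_VL.2 ⟨_, rfl⟩,
      (le_finrank_inf_perp_VL_iff hGli hrk).2 ⟨U, hU, le_rfl⟩, by rw [hUmax, finrank_perp_VL]⟩
  · rintro _ ⟨V, hV, hr, rfl⟩
    obtain ⟨M, rfl⟩ := galoisClosed_iff_exists_eq_perp_VL.1 hV
    obtain ⟨U, hU, hMU⟩ := (le_finrank_inf_perp_VL_iff hGli hrk).1 hr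
    rw [finrank_perp_VL]
    exact Nat.sub_le_sub_left ((finrank_mono hMU).trans (le_csSup hT_bdd ⟨U, hU, rfl⟩)) n

end RankPaper
end

section
/- For nested F_{q^m}-linear codes C_2 ⊊ C_1 ⊆ F_{q^m}^n and every 1 ≤ r ≤ dim(C_1/C_2), the r-th relative generalized rank weight satisfies M_{R,r}(C_1, C_2) = min{ wt_R(D) : D ⊆ C_1 an F_{q^m}-subspace with D ∩ C_2 = 0 and dim_{F_{q^m}} D = r }. -/
open Submodule Module

namespace RankPaper

variable {n : ℕ}

/-! If `V` is Galois closed, a complement of `C₂ ∩ V` in `C₁ ∩ V` contains an `r`-dimensional `D`,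
and `D* ⊆ V` because `V` is closed. Conversely, for `D ⊆ C₁` of dimension `r` meeting `C₂`
trivially, `V = D*` is Galois closed and `D ⊕ (C₂ ∩ V) ⊆ C₁ ∩ V`. This uses only that `D ↦ D*` is a
closure operator; it is idempotent because the `q`-Frobenius is semilinear and `x ^ q ^ m = x`. -/

section RelativeDimension

variable {K V : Type*} [DivisionRing K] [AddCommGroup V] [Module K V]
  {A B : Submodule K V} {r : ℕ}

theorem exists_le_finrank_eq_s4 (hr : r ≤ finrank K B) : ∃ D ≤ B, finrank K D = r := by
  obtain ⟨f, hf⟩ := exists_linearIndependent_of_le_finrank hr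
  refine ⟨(span K (Set.range f)).map B.subtype, map_subtype_le _ _, ?_⟩
  rw [finrank_map_subtype_eq, finrank_span_eq_card hf, Fintype.card_fin]

theorem finrank_sup_of_disjoint [FiniteDimensional K A] [FiniteDimensional K B]
    (h : Disjoint A B) : finrank K ↥(A ⊔ B) = finrank K A + finrank K B := by
  rw [← finrank_sup_add_finrank_inf_eq, h.eq_bot, finrank_bot, add_zero]

variable [FiniteDimensional K V]

theorem le_finrank_sub_finrank_iff_exists_disjoint (hAB : A ≤ B) :
    r ≤ finrank K B - finrank K A ↔ ∃ D ≤ B, Disjoint D A ∧ finrank K D = r := by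
  constructor
  · intro hr
    obtain ⟨A', hdisj, rfl⟩ := IsModularLattice.exists_disjoint_and_sup_eq hAB
    rw [finrank_sup_of_disjoint hdisj, Nat.add_sub_cancel_left] at hr
    obtain ⟨D, hDA', hD⟩ := exists_le_finrank_eq_s4 hr
    exact ⟨D, hDA'.trans le_sup_right, hdisj.symm.mono_left hDA', hD⟩
  · rintro ⟨D, hDB, hdisj, rfl⟩
    apply Nat.le_sub_of_add_le
    rw [← finrank_sup_of_disjoint hdisj]
    exact finrank_mono (sup_le hDB hAB)

/-- For `r > finrank K B - finrank K A` both sets are empty and both sides are `sInf ∅ = 0`. -/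
theorem sInf_finrank_isClosed_eq_sInf_finrank_closure (c : ClosureOperator (Submodule K V))
    (hAB : A ≤ B) (r : ℕ) :
    sInf {d | ∃ W, c.IsClosed W ∧ r ≤ finrank K ↥(B ⊓ W) - finrank K ↥(A ⊓ W) ∧
        d = finrank K W} =
      sInf {d | ∃ D, D ≤ B ∧ Disjoint D A ∧ finrank K D = r ∧ d = finrank K (c D)} := by
  have relative_dim_iff (W : Submodule K V) :=
    le_finrank_sub_finrank_iff_exists_disjoint (r := r) (inf_le_inf_right W hAB)
  apply csInf_eq_csInf_of_forall_exists_le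
  · rintro _ ⟨W, hW, hr, rfl⟩
    obtain ⟨D, hDBW, hdisj, hD⟩ := (relative_dim_iff W).1 hr
    obtain ⟨hDB, hDW⟩ := le_inf_iff.1 hDBW
    have hDA : Disjoint D A := by
      rwa [disjoint_comm, disjoint_assoc, inf_eq_right.2 hDW, disjoint_comm] at hdisj
    exact ⟨_, ⟨D, hDB, hDA, hD, rfl⟩, finrank_mono (ClosureOperator.closure_min hDW hW)⟩
  · rintro _ ⟨D, hDB, hDA, hD, rfl⟩
    have hr := (relative_dim_iff (c D)).2
      ⟨D, le_inf hDB (c.le_closure D), hDA.mono_right inf_le_left, hD⟩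
    exact ⟨_, ⟨c D, c.isClosed_closure D, hr, rfl⟩, le_rfl⟩

end RelativeDimension

section GaloisClosure

variable {Fqm : Type} [Field Fqm] {q m : ℕ} {D E : Submodule Fqm (Fin n → Fqm)}
  {v : Fin n → Fqm}

theorem qpowMap_zero (v : Fin n → Fqm) : qpowMap q 0 v = v := by
  funext j
  simp only [qpowMap, pow_zero, pow_one]

theorem qpowMap_qpowMap (i j : ℕ) (v : Fin n → Fqm) :
    qpowMap q i (qpowMap q j v) = qpowMap q (j + i) v := by
  funext k
  simp only [qpowMap, pow_add, pow_mul]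

theorem periodic_qpowMap (hper : ∀ x : Fqm, x ^ q ^ m = x) (v : Fin n → Fqm) :
    Function.Periodic (fun i => qpowMap q i v) m := by
  intro i
  funext j
  rw [add_comm]
  simp only [qpowMap, pow_add, pow_mul, hper]

theorem galClosure_le_iff :
    galClosure q m D ≤ E ↔ ∀ i < m, ∀ v ∈ D, qpowMap q i v ∈ E := by
  simp only [galClosure, span_le, Set.iUnion_subset_iff, Set.image_subset_iff, Finset.mem_range]
  rfl

theorem qpowMap_mem_galClosure (hm : 0 < m) (hper : ∀ x : Fqm, x ^ q ^ m = x) (hv : v ∈ D)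
    (i : ℕ) : qpowMap q i v ∈ galClosure q m D := by
  rw [← (periodic_qpowMap hper v).map_mod_nat i]
  exact galClosure_le_iff.1 le_rfl _ (Nat.mod_lt i hm) v hv

end GaloisClosure

section FiniteField

variable (Fq : Type*) [Field Fq] [Fintype Fq] {Fqm : Type} [Field Fqm] [Algebra Fq Fqm]

theorem frobeniusAlgHom_pow_apply (i : ℕ) (x : Fqm) :
    (FiniteField.frobeniusAlgHom Fq Fqm ^ i) x = x ^ Fintype.card Fq ^ i := by
  rw [AlgHom.coe_pow, FiniteField.coe_frobeniusAlgHom, pow_iterate]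

/-- The coordinatewise `q^i`-th power map, `q = #Fq`, as a map semilinear over the `i`-th power of
the Frobenius, so that preimages of subspaces under it are subspaces. -/
def qpowSemilinearMap (i : ℕ) :
    (Fin n → Fqm) →ₛₗ[(FiniteField.frobeniusAlgHom Fq Fqm ^ i : Fqm →ₐ[Fq] Fqm).toRingHom]
      (Fin n → Fqm) where
  toFun := qpowMap (Fintype.card Fq) i
  map_add' v w := by
    funext j
    simp only [qpowMap, Pi.add_apply, ← frobeniusAlgHom_pow_apply, map_add]
  map_smul' a v := by
    funext j
    simp [qpowMap, ← frobeniusAlgHom_pow_apply]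

variable [Finite Fqm]

theorem pow_card_pow_finrank (x : Fqm) : x ^ Fintype.card Fq ^ finrank Fq Fqm = x := by
  have := Fintype.ofFinite Fqm
  rw [← Module.card_eq_pow_finrank, FiniteField.pow_card]

theorem qpowMap_mem_galClosure_of_mem_galClosure {D : Submodule Fqm (Fin n → Fqm)}
    {v : Fin n → Fqm} (hv : v ∈ galClosure (Fintype.card Fq) (finrank Fq Fqm) D) (i : ℕ) :
    qpowMap (Fintype.card Fq) i v ∈ galClosure (Fintype.card Fq) (finrank Fq Fqm) D := by
  suffices galClosure (Fintype.card Fq) (finrank Fq Fqm) D ≤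
      (galClosure (Fintype.card Fq) (finrank Fq Fqm) D).comap (qpowSemilinearMap Fq i) from this hv
  refine galClosure_le_iff.2 fun j _ w hw => ?_
  change qpowMap _ i (qpowMap _ j w) ∈ galClosure _ _ D
  rw [qpowMap_qpowMap]
  exact qpowMap_mem_galClosure finrank_pos (pow_card_pow_finrank Fq) hw (j + i)

/-- The Galois closure `D ↦ D*` as a closure operator on the lattice of subspaces; its closed
elements are, by definition, the Galois closed subspaces. -/
noncomputable def galClosureOperator (n : ℕ) (Fqm : Type) [Field Fqm] [Algebra Fq Fqm]
    [Finite Fqm] : ClosureOperator (Submodule Fqm (Fin n → Fqm)) :=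
  .mk₂ (galClosure (Fintype.card Fq) (finrank Fq Fqm))
    (fun _ v hv => qpowMap_zero v ▸
      qpowMap_mem_galClosure finrank_pos (pow_card_pow_finrank Fq) hv 0)
    (fun _ _ hDE => galClosure_le_iff.2 fun i _ _ hv =>
      qpowMap_mem_galClosure_of_mem_galClosure Fq (hDE hv) i)

end FiniteField

/-- for nested codes `C₂ ⊊ C₁ ⊆ Fqm^n` and `1 ≤ r ≤ dim(C₁/C₂)`,
`M_{R,r}(C₁,C₂) = min { wt_R(D) : D ⊆ C₁, D ∩ C₂ = 0, dim D = r }`. -/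
theorem stmt4 (q m n r : ℕ) (Fq Fqm : Type) [Field Fq] [Field Fqm] [Algebra Fq Fqm]
    [Finite Fqm] (hq : Nat.card Fq = q) (hm : finrank Fq Fqm = m)
    (C₁ C₂ : Submodule Fqm (Fin n → Fqm)) (hC : C₂ < C₁)
    (hr1 : 1 ≤ r) (hrl : r ≤ finrank Fqm C₁ - finrank Fqm C₂) :
    MR q m C₁ C₂ r = sInf { w | ∃ D : Submodule Fqm (Fin n → Fqm),
        D ≤ C₁ ∧ D ⊓ C₂ = ⊥ ∧ finrank Fqm D = r ∧ w = wtR q m D } := by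
  have := Finite.of_injective _ (algebraMap Fq Fqm).injective
  have := Fintype.ofFinite Fq
  rw [Nat.card_eq_fintype_card] at hq
  subst hq hm
  simp only [← disjoint_iff]
  exact sInf_finrank_isClosed_eq_sInf_finrank_closure (galClosureOperator Fq n Fqm) hC.le r

end RankPaper
end

section
/- Assume n ≤ m. For every F_{q^m}-linear subspace D ⊆ F_{q^m}^n, wt_H(D) = max{ wt_R(φ(D)) : φ is a Hamming equivalence of F_{q^m}^n }, where a Hamming equivalence (monomial map) of F_{q^m}^n is an F_{q^m}-linear map of the form φ(c_1, ..., c_n) = (γ_1 c_{σ(1)}, ..., γ_n c_{σ(n)}) for a permutation σ of {1, ..., n} and nonzero scalars γ_1, ..., γ_n ∈ F_{q^m}. -/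
open Submodule Module

namespace RankPaper

variable {n : ℕ}

/-- A monomial map (Hamming equivalence) of `Fqm^n`:
`φ(c) i = γ i * c (σ i)` for a permutation `σ` and nonzero scalars `γ`. -/
def monomialMap {Fqm : Type} [Field Fqm] (σ : Equiv.Perm (Fin n)) (γ : Fin n → Fqm) :
    (Fin n → Fqm) →ₗ[Fqm] (Fin n → Fqm) where
  toFun c := fun i => γ i * c (σ i)
  map_add' x y := by funext i; simp [mul_add]
  map_smul' a x := by funext i; simp only [Pi.smul_apply, smul_eq_mul, RingHom.id_apply]; ring

/-!
A code lives on its support, and the Galois closure does not enlarge the support, so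
`wt_R(φ(D)) ≤ wt_H(φ(D)) = wt_H(D)` for every Hamming equivalence `φ`.

For the converse, let `wt_H(D) ≤ m`. Fewer than `q ^ m` hyperplanes do not cover `D`, so `D` has a
codeword `d` that is nonzero on the whole support of `D`. Rescaling the coordinates turns the
entries of `d` on the support into elements of `Fqm` that are linearly independent over `Fq`. The
automorphisms of `Fqm` over `Fq`, which are the first `m` powers of the Frobenius, form an
`Fqm`-basis of the `Fq`-linear endomorphisms of `Fqm` (Dedekind), so the conjugates of the rescaled
word span the full coordinate space on the support.
-/

section Galois

theorem surjective_linearMap_comp {K V W ι : Type*} [Field K] [AddCommGroup V] [Module K V]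
    [AddCommGroup W] [Module K W] {b : ι → V} (hb : LinearIndependent K b) :
    Function.Surjective fun f : V →ₗ[K] W => f ∘ b := by
  intro w
  obtain ⟨f, hf⟩ := LinearMap.exists_extend ((Basis.span hb).constr ℕ w)
  refine ⟨f, funext fun i => ?_⟩
  calc f (b i) = (f ∘ₗ (span K (Set.range b)).subtype) (Basis.span hb i) := by simp
    _ = w i := by rw [hf, Basis.constr_basis]

variable (K L : Type*) [Field K] [Field L] [Algebra K L]

theorem span_range_algHom_toLinearMap_eq_top [FiniteDimensional K L] [IsGalois K L] :
    span L (Set.range (AlgHom.toLinearMap : (L →ₐ[K] L) → L →ₗ[K] L)) = ⊤ := by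
  have card_eq : Fintype.card (L →ₐ[K] L) = finrank L (L →ₗ[K] L) := by
    rw [finrank_linearMap_self, ← IsGalois.card_aut_eq_finrank, ← Nat.card_eq_fintype_card,
      Nat.card_congr (algEquivEquivAlgHom K L).toEquiv]
  exact (linearIndependent_algHom_toLinearMap K L L).span_eq_top_of_card_eq_finrank' card_eq

variable {K L} in
theorem span_range_algHom_comp_eq_top [FiniteDimensional K L] [IsGalois K L] {ι : Type*}
    {b : ι → L} (hb : LinearIndependent K b) :
    span L (Set.range fun σ : L →ₐ[K] L => σ ∘ b) = ⊤ := by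
  let evalAt : (L →ₗ[K] L) →ₗ[L] ι → L := LinearMap.funLeft L L b ∘ₗ LinearMap.ltoFun K L L L
  have evalAt_surjective : Function.Surjective evalAt := surjective_linearMap_comp hb
  rw [← LinearMap.range_eq_top.mpr evalAt_surjective, LinearMap.range_eq_map,
    ← span_range_algHom_toLinearMap_eq_top K L, map_span, ← Set.range_comp]
  rfl

variable {K L} in
theorem exists_algHom_eq_pow_natCard_pow [Finite L] (σ : L →ₐ[K] L) :
    ∃ j < finrank K L, ∀ x, σ x = x ^ Nat.card K ^ j := by
  have : Finite K := Finite.of_injective _ (algebraMap K L).injective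
  have := Fintype.ofFinite K
  obtain ⟨j, rfl⟩ := (FiniteField.bijective_frobeniusAlgHom_pow K L).surjective σ
  refine ⟨j, j.isLt, fun x => ?_⟩
  simp only [AlgHom.coe_pow, FiniteField.coe_frobeniusAlgHom, pow_iterate,
    Nat.card_eq_fintype_card]

end Galois

section Support

variable {ι K : Type*} [Field K]

/-- The support of a linear code `D ⊆ K^ι`: the coordinates at which some codeword is nonzero. -/
def supp (D : Submodule K (ι → K)) : Set ι :=
  {i | ∃ d ∈ D, d i ≠ 0}

theorem eq_zero_of_notMem_supp {D : Submodule K (ι → K)} {d : ι → K} (hd : d ∈ D) {i : ι}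
    (hi : i ∉ supp D) : d i = 0 :=
  of_not_not fun hdi => hi ⟨d, hd, hdi⟩

theorem finrank_le_ncard_supp [Finite ι] (D : Submodule K (ι → K)) :
    finrank K D ≤ (supp D).ncard := by
  have := Fintype.ofFinite (supp D)
  let restrict : D →ₗ[K] supp D → K := LinearMap.funLeft K K Subtype.val ∘ₗ D.subtype
  have restrict_injective : Function.Injective restrict := by
    refine (injective_iff_map_eq_zero restrict).mpr fun d hd => Subtype.ext (funext fun i => ?_)
    by_cases hi : i ∈ supp D
    · exact congrFun hd ⟨i, hi⟩
    · exact eq_zero_of_notMem_supp d.2 hi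
  calc finrank K D ≤ finrank K (supp D → K) :=
        LinearMap.finrank_le_finrank_of_injective restrict_injective
    _ = (supp D).ncard := by
        rw [finrank_fintype_fun_eq_card, ← Nat.card_eq_fintype_card, Nat.card_coe_set_eq]

theorem exists_mem_forall_mem_supp_ne_zero (D : Submodule K (ι → K))
    (hD : (supp D).encard < ENat.card K) : ∃ d ∈ D, ∀ i ∈ supp D, d i ≠ 0 := by
  have := (Set.encard_lt_top_iff.mp (hD.trans_le le_top)).fintype
  let vanishingAt (i : supp D) : Submodule K D :=
    LinearMap.ker ((LinearMap.proj i.1).domRestrict D)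
  have vanishingAt_ne_top (i : supp D) : vanishingAt i ≠ ⊤ := by
    obtain ⟨i, d, hd, hdi⟩ := i
    exact fun htop => hdi (htop.ge (mem_top (x := (⟨d, hd⟩ : D))))
  have union_ssubset := iUnion_ssubset_of_forall_ne_top_of_card_lt Finset.univ vanishingAt
    vanishingAt_ne_top (by rwa [Finset.card_univ, Set.coe_fintypeCard])
  obtain ⟨d, -, hd⟩ := Set.exists_of_ssubset union_ssubset
  refine ⟨d, d.2, fun i hi hdi => hd ?_⟩
  exact Set.mem_biUnion (Finset.mem_univ (⟨i, hi⟩ : supp D)) hdi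

end Support

theorem exists_forall_ne_zero_linearIndependent_mul (K : Type*) {L ι : Type*} [Field K] [Field L]
    [Algebra K L] {S : Set ι} (hS : S.Finite) (hcard : S.ncard ≤ finrank K L) {d : ι → L}
    (hd : ∀ i ∈ S, d i ≠ 0) :
    ∃ γ : ι → L, (∀ i, γ i ≠ 0) ∧ LinearIndependent K fun i : S => γ i * d i := by
  classical
  have := hS.to_subtype
  obtain ⟨b, hb⟩ := exists_linearIndependent_of_le_finrank hcard
  let index : S ≃ Fin S.ncard := Finite.equivFinOfCardEq (Nat.card_coe_set_eq S)
  have hbS : LinearIndependent K (b ∘ index) := hb.comp index index.injective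
  refine ⟨fun i => if hi : i ∈ S then b (index ⟨i, hi⟩) / d i else 1, fun i => ?_, ?_⟩
  · by_cases hi : i ∈ S
    · simpa [hi] using ⟨hb.ne_zero _, hd i hi⟩
    · simp [hi]
  · convert hbS with i
    simp [hd i i.2]

section Weights

variable {L : Type} [Field L]

theorem wtH_eq_ncard_supp (D : Submodule L (Fin n → L)) : wtH D = (supp D).ncard :=
  rfl

theorem wtH_le (D : Submodule L (Fin n → L)) : wtH D ≤ n := by
  simpa [wtH_eq_ncard_supp] using Set.ncard_le_card (supp D)

theorem supp_map_monomialMap (D : Submodule L (Fin n → L)) (σ : Equiv.Perm (Fin n))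
    {γ : Fin n → L} (hγ : ∀ i, γ i ≠ 0) : supp (D.map (monomialMap σ γ)) = σ ⁻¹' supp D := by
  ext i
  simp [supp, monomialMap, hγ]

theorem wtH_map_monomialMap (D : Submodule L (Fin n → L)) (σ : Equiv.Perm (Fin n))
    {γ : Fin n → L} (hγ : ∀ i, γ i ≠ 0) : wtH (D.map (monomialMap σ γ)) = wtH D := by
  rw [wtH_eq_ncard_supp, supp_map_monomialMap D σ hγ, ← Equiv.image_symm_eq_preimage,
    Set.ncard_image_of_injective _ σ.symm.injective, wtH_eq_ncard_supp]

theorem qpowMap_mem_galClosure_s6 (q : ℕ) {m j : ℕ} (hj : j < m) {D : Submodule L (Fin n → L)}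
    {d : Fin n → L} (hd : d ∈ D) : qpowMap q j d ∈ galClosure q m D :=
  subset_span (Set.mem_biUnion (Finset.mem_range.mpr hj) (Set.mem_image_of_mem _ hd))

theorem supp_galClosure_subset {q : ℕ} (hq : q ≠ 0) (m : ℕ) (D : Submodule L (Fin n → L)) :
    supp (galClosure q m D) ⊆ supp D := by
  rintro i ⟨v, hv, hvi⟩
  by_contra hi
  have closure_le : galClosure q m D ≤ LinearMap.ker (LinearMap.proj (φ := fun _ => L) i) := by
    refine span_le.mpr (Set.iUnion₂_subset fun j _ => ?_)
    rintro _ ⟨d, hd, rfl⟩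
    simp [qpowMap, eq_zero_of_notMem_supp hd hi, hq]
  exact hvi (closure_le hv)

theorem wtR_le_wtH {q : ℕ} (hq : q ≠ 0) (m : ℕ) (D : Submodule L (Fin n → L)) :
    wtR q m D ≤ wtH D :=
  (finrank_le_ncard_supp _).trans (Set.ncard_le_ncard (supp_galClosure_subset hq m D))

variable (K : Type*) [Field K] [Algebra K L] [Finite L]

variable {K} in
theorem ncard_le_wtR_of_linearIndependent {D : Submodule L (Fin n → L)} {c : Fin n → L}
    (hc : c ∈ D) {S : Set (Fin n)} (hS : LinearIndependent K fun i : S => c i) :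
    S.ncard ≤ wtR (Nat.card K) (finrank K L) D := by
  have := Fintype.ofFinite S
  let closure := galClosure (Nat.card K) (finrank K L) D
  let restrict : (Fin n → L) →ₗ[L] S → L := LinearMap.funLeft L L Subtype.val
  have map_restrict_eq_top : closure.map restrict = ⊤ := by
    rw [eq_top_iff, ← span_range_algHom_comp_eq_top hS, span_le]
    rintro _ ⟨σ, rfl⟩
    obtain ⟨j, hj, hσ⟩ := exists_algHom_eq_pow_natCard_pow σ
    exact ⟨_, qpowMap_mem_galClosure_s6 _ hj hc, funext fun i => (hσ (c i)).symm⟩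
  calc S.ncard = finrank L (closure.map restrict) := by
        rw [map_restrict_eq_top, finrank_top, finrank_fintype_fun_eq_card,
          ← Nat.card_eq_fintype_card, Nat.card_coe_set_eq]
    _ ≤ finrank L closure := finrank_map_le restrict closure

theorem exists_wtH_le_wtR_map_monomialMap (D : Submodule L (Fin n → L))
    (hD : wtH D ≤ finrank K L) :
    ∃ γ : Fin n → L, (∀ i, γ i ≠ 0) ∧
      wtH D ≤ wtR (Nat.card K) (finrank K L) (D.map (monomialMap 1 γ)) := by
  have : Finite K := Finite.of_injective _ (algebraMap K L).injective
  have wtH_lt_card : wtH D < Nat.card L :=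
    calc wtH D ≤ finrank K L := hD
      _ < Nat.card K ^ finrank K L := Nat.lt_pow_self Finite.one_lt_card
      _ = Nat.card L := natCard_eq_pow_finrank.symm
  have encard_supp_lt : (supp D).encard < ENat.card L := by
    rw [ENat.card_eq_coe_natCard, ← (supp D).toFinite.cast_ncard_eq]
    exact_mod_cast wtH_lt_card
  obtain ⟨d, hd, hd_ne⟩ := exists_mem_forall_mem_supp_ne_zero D encard_supp_lt
  obtain ⟨γ, hγ, hindep⟩ :=
    exists_forall_ne_zero_linearIndependent_mul K (supp D).toFinite hD hd_ne
  exact ⟨γ, hγ, ncard_le_wtR_of_linearIndependent (mem_map_of_mem hd) hindep⟩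

theorem stmt6_general (D : Submodule L (Fin n → L)) (hD : wtH D ≤ finrank K L) :
    IsGreatest { w | ∃ σ : Equiv.Perm (Fin n), ∃ γ : Fin n → L,
        (∀ i, γ i ≠ 0) ∧ w = wtR (Nat.card K) (finrank K L) (D.map (monomialMap σ γ)) }
      (wtH D) := by
  have : Finite K := Finite.of_injective _ (algebraMap K L).injective
  have wtR_map_le (σ : Equiv.Perm (Fin n)) {γ : Fin n → L} (hγ : ∀ i, γ i ≠ 0) :
      wtR (Nat.card K) (finrank K L) (D.map (monomialMap σ γ)) ≤ wtH D :=
    (wtR_le_wtH Nat.card_pos.ne' _ _).trans_eq (wtH_map_monomialMap D σ hγ)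
  obtain ⟨γ, hγ, hle⟩ := exists_wtH_le_wtR_map_monomialMap K D hD
  refine ⟨⟨1, γ, hγ, hle.antisymm (wtR_map_le 1 hγ)⟩, ?_⟩
  rintro _ ⟨σ, γ, hγ, rfl⟩
  exact wtR_map_le σ hγ

end Weights

/-- if `n ≤ m`, then for every subspace `D ⊆ Fqm^n`,
`wt_H(D) = max { wt_R(φ(D)) : φ a Hamming equivalence of Fqm^n }`. -/
theorem stmt6 (q m n : ℕ) (Fq Fqm : Type) [Field Fq] [Field Fqm] [Algebra Fq Fqm]
    [Finite Fqm] (hq : Nat.card Fq = q) (hm : finrank Fq Fqm = m) (hnm : n ≤ m)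
    (D : Submodule Fqm (Fin n → Fqm)) :
    wtH D = sSup { w | ∃ σ : Equiv.Perm (Fin n), ∃ γ : Fin n → Fqm,
        (∀ i, γ i ≠ 0) ∧ w = wtR q m (D.map (monomialMap σ γ)) } := by
  subst hq hm
  exact (stmt6_general Fq D ((wtH_le D).trans hnm)).csSup_eq.symm

end RankPaper
end
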